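/- There exists ε₀ ≥ π/180 such that: for every triangle T each of whose three angles differs from π/3 by at most ε₀/2, and for every ε with 0 < ε < ε₀/2, one has h(n, T, ε) = h(n) for every natural number n. In particular, h(n, T, ε) = (n³ − n)/24 when n is a power of 3. -/

import Mathlib

open EuclideanGeometry

noncomputable section

abbrev Plane := EuclideanSpace ℝ (Fin 2)

/-- A triple of points is a (non-degenerate) triangle if its points are not collinear. -/
def IsTriangle (p : Fin 3 → Plane) : Prop := ¬ Collinear ℝ (Set.range p)

/-- The angle of the triple `p` at its `i`-th vertex. -/
noncomputable def triAngle (p : Fin 3 → Plane) (i : Fin 3) : ℝ :=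
  EuclideanGeometry.angle (p (i + 1)) (p i) (p (i + 2))

/-- `p` is ε-similar to `T`: some correspondence of vertices makes corresponding
angles differ by less than ε. -/
def EpsSimilar (ε : ℝ) (p T : Fin 3 → Plane) : Prop :=
  ∃ σ : Equiv.Perm (Fin 3), ∀ i, |triAngle p i - triAngle T (σ i)| < ε

/-- The finite set `S` forms a triangle ε-similar to `T`. -/
def FormsSimilar (ε : ℝ) (T : Fin 3 → Plane) (S : Finset Plane) : Prop :=
  ∃ p : Fin 3 → Plane, (S : Set Plane) = Set.range p ∧ IsTriangle p ∧ EpsSimilar ε p T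

/-- The number of 3-element subsets of `P` forming a triangle ε-similar to `T`. -/
noncomputable def simCount (ε : ℝ) (T : Fin 3 → Plane) (P : Finset Plane) : ℕ :=
  Set.ncard {S : Finset Plane | S ⊆ P ∧ S.card = 3 ∧ FormsSimilar ε T S}

/-- `hGeo n T ε` = maximum over `n`-point sets `P` of the number of 3-element
subsets of `P` forming a triangle ε-similar to `T`. -/
noncomputable def hGeo (n : ℕ) (T : Fin 3 → Plane) (ε : ℝ) : ℕ :=
  sSup {m | ∃ P : Finset Plane, P.card = n ∧ simCount ε T P = m}

/-- The recurrence defining the sequence `h`. -/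
def HRec (h : ℕ → ℕ) : Prop :=
  h 0 = 0 ∧ h 1 = 0 ∧ h 2 = 0 ∧
  ∀ n, 3 ≤ n → IsGreatest
    {m | ∃ a b c : ℕ, a + b + c = n ∧ a ≤ n - 1 ∧ b ≤ n - 1 ∧ c ≤ n - 1 ∧
      m = a * b * c + h a + h b + h c} (h n)

/-!
Upper bound.  Merging two points that lie in no common counted triangle into one point of their
total weight (Zykov symmetrisation) can be done without decreasing the weighted count, so one may
assume that every two points lie in a common counted triangle.  All these triangles are almost
equilateral.  Take one on a diameter of the point set.  For a vertex `a` of it and a further point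
`p`, the third point `q` of a counted triangle through `a` and `p` is no farther than the diameter
from the other two vertices; rotating by 60° about `a` turns this into a bound on the distance from
`p` to the apex of the equilateral triangle erected outwards on one of the sides at `a`.  Using all
three vertices, `p` must lie near a vertex.  So the points fall into three clusters, and every
counted triangle either lies inside one cluster or has one vertex in each, which is the recurrence.

Lower bound.  Replace the vertices of `T` by optimal configurations shrunk by a homothety.
-/

open Finset
open scoped Real

section Recurrence

variable {h : ℕ → ℕ}

lemma HRec.eq_zero_of_lt_three (hrec : HRec h) {n : ℕ} (hn : n < 3) : h n = 0 := by
  obtain ⟨h0, h1, h2, -⟩ := hrec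
  interval_cases n <;> assumption

lemma HRec.mul_add_add_le (hrec : HRec h) (a b c : ℕ) :
    a * b * c + h a + h b + h c ≤ h (a + b + c) := by
  have h0 : h 0 = 0 := hrec.1
  by_cases hlt : a < a + b + c ∧ b < a + b + c ∧ c < a + b + c
  · by_cases hn : 3 ≤ a + b + c
    · exact (hrec.2.2.2 _ hn).2 ⟨a, b, c, rfl, by lia, by lia, by lia, rfl⟩
    · have hprod : a * b * c = 0 := by
        rcases (by lia : a = 0 ∨ b = 0 ∨ c = 0) with rfl | rfl | rfl <;> simp
      have hvanish : ∀ m ≤ a + b + c, h m = 0 := fun m hm => hrec.eq_zero_of_lt_three (by lia)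
      rw [hprod, hvanish a (by lia), hvanish b (by lia), hvanish c (by lia)]
      exact Nat.zero_le _
  · obtain ⟨rfl, rfl⟩ | ⟨rfl, rfl⟩ | ⟨rfl, rfl⟩ :
        (b = 0 ∧ c = 0) ∨ (a = 0 ∧ c = 0) ∨ (a = 0 ∧ b = 0) := by lia
    all_goals simp [h0]

lemma HRec.prod_add_sum_le (hrec : HRec h) (a : Fin 3 → ℕ) :
    ∏ i, a i + ∑ i, h (a i) ≤ h (∑ i, a i) := by
  simpa only [Fin.prod_univ_three, Fin.sum_univ_three, add_assoc] using
    hrec.mul_add_add_le (a 0) (a 1) (a 2)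

lemma HRec.exists_eq_prod_add_sum (hrec : HRec h) {n : ℕ} (hn : 3 ≤ n) :
    ∃ a : Fin 3 → ℕ, ∑ i, a i = n ∧ (∀ i, a i < n) ∧ h n = ∏ i, a i + ∑ i, h (a i) := by
  obtain ⟨a, b, c, hsum, ha, hb, hc, hval⟩ := (hrec.2.2.2 n hn).1
  refine ⟨![a, b, c], ?_, ?_, ?_⟩
  · simpa [Fin.sum_univ_three] using hsum
  · rw [Fin.forall_fin_succ, Fin.forall_fin_two]
    exact ⟨show a < n by lia, show b < n by lia, show c < n by lia⟩
  · simpa [Fin.prod_univ_three, Fin.sum_univ_three, add_assoc] using hval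

lemma mul_add_cubes_le_cube_add (a b c : ℕ) :
    24 * (a * b * c) + a ^ 3 + b ^ 3 + c ^ 3 ≤ (a + b + c) ^ 3 := by
  zify
  nlinarith [mul_nonneg (Int.natCast_nonneg a) (sq_nonneg ((b : ℤ) - c)),
    mul_nonneg (Int.natCast_nonneg b) (sq_nonneg ((a : ℤ) - c)),
    mul_nonneg (Int.natCast_nonneg c) (sq_nonneg ((a : ℤ) - b))]

lemma HRec.mul_add_le_cube (hrec : HRec h) (n : ℕ) : 24 * h n + n ≤ n ^ 3 := by
  induction n using Nat.strong_induction_on with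
  | _ n ih =>
  rcases lt_or_ge n 3 with hn | hn
  · rw [hrec.eq_zero_of_lt_three hn]
    interval_cases n <;> decide
  · obtain ⟨a, hsum, hlt, hval⟩ := hrec.exists_eq_prod_add_sum hn
    have hcube := mul_add_cubes_le_cube_add (a 0) (a 1) (a 2)
    have := ih _ (hlt 0)
    have := ih _ (hlt 1)
    have := ih _ (hlt 2)
    simp only [Fin.prod_univ_three, Fin.sum_univ_three] at hsum hval
    rw [hsum] at hcube
    lia

lemma HRec.mul_pow_three_add (hrec : HRec h) (k : ℕ) : 24 * h (3 ^ k) + 3 ^ k = (3 ^ k) ^ 3 := by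
  refine (hrec.mul_add_le_cube _).antisymm ?_
  induction k with
  | zero => simp
  | succ k ih =>
    have hstep := hrec.mul_add_add_le (3 ^ k) (3 ^ k) (3 ^ k)
    rw [show 3 ^ k + 3 ^ k + 3 ^ k = 3 ^ (k + 1) by ring] at hstep
    calc (3 ^ (k + 1)) ^ 3 = 24 * (3 ^ k * 3 ^ k * 3 ^ k) + 3 * (3 ^ k) ^ 3 := by ring
      _ ≤ 24 * (3 ^ k * 3 ^ k * 3 ^ k) + 3 * (24 * h (3 ^ k) + 3 ^ k) := by gcongr
      _ ≤ 24 * h (3 ^ (k + 1)) + 3 ^ (k + 1) := by lia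

end Recurrence

section Hypergraph

variable {α : Type*}

section EdgeSum

variable {R : Type*} [CommSemiring R]

/-- The weighted edge count of the family `F`, each edge being counted with the product of the
weights of its vertices: the number of edges after replacing every vertex `x` by `w x` copies. -/
def edgeSum (F : Finset (Finset α)) (w : α → R) : R :=
  ∑ S ∈ F, ∏ x ∈ S, w x

variable [DecidableEq α]

/-- The weighted degree of the vertex `u` in the family `F`, i.e. the coefficient of `w u` in
`edgeSum F w`. -/
def linkSum (F : Finset (Finset α)) (w : α → R) (u : α) : R :=
  ∑ S ∈ F with u ∈ S, ∏ x ∈ S.erase u, w x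

lemma edgeSum_eq_mul_linkSum_add (F : Finset (Finset α)) (w : α → R) (u : α) :
    edgeSum F w = w u * linkSum F w u + edgeSum {S ∈ F | u ∉ S} w := by
  unfold edgeSum linkSum
  rw [← sum_filter_add_sum_filter_not F (fun S => u ∈ S), mul_sum]
  congr 1
  exact sum_congr rfl fun S hS => (mul_prod_erase S w (mem_filter.1 hS).2).symm

lemma edgeSum_update_of_notMem {F : Finset (Finset α)} {u : α} (hF : ∀ S ∈ F, u ∉ S) (w : α → R)
    (r : R) : edgeSum F (Function.update w u r) = edgeSum F w :=
  sum_congr rfl fun S hS => prod_update_of_notMem (hF S hS) w r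

lemma linkSum_update_self (F : Finset (Finset α)) (w : α → R) (u : α) (r : R) :
    linkSum F (Function.update w u r) u = linkSum F w u :=
  sum_congr rfl fun S _ => prod_update_of_notMem (notMem_erase u S) w r

lemma linkSum_filter_notMem {F : Finset (Finset α)} {x y : α} (hF : ∀ S ∈ F, x ∈ S → y ∉ S)
    (w : α → R) : linkSum {S ∈ F | y ∉ S} w x = linkSum F w x := by
  unfold linkSum
  congr 1
  ext S
  simp only [mem_filter]
  exact ⟨fun hS => ⟨hS.1.1, hS.2⟩, fun hS => ⟨⟨hS.1, hF S hS.1 hS.2⟩, hS.2⟩⟩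

lemma edgeSum_le_edgeSum_update [PartialOrder R] [IsOrderedRing R] {F : Finset (Finset α)}
    {w : α → R} {x y : α} (hF : ∀ S ∈ F, x ∈ S → y ∉ S) (hwy : 0 ≤ w y)
    (hlink : linkSum F w y ≤ linkSum F w x) :
    edgeSum F w ≤ edgeSum {S ∈ F | y ∉ S} (Function.update w x (w x + w y)) := by
  set Fy : Finset (Finset α) := {S ∈ F | y ∉ S} with hFy
  have avoid_x : ∀ S ∈ ({S ∈ Fy | x ∉ S} : Finset (Finset α)), x ∉ S :=
    fun S hS => (mem_filter.1 hS).2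
  calc edgeSum F w
      = w y * linkSum F w y + (w x * linkSum F w x + edgeSum {S ∈ Fy | x ∉ S} w) := by
        rw [edgeSum_eq_mul_linkSum_add F w y, ← hFy, edgeSum_eq_mul_linkSum_add Fy w x,
          linkSum_filter_notMem hF]
    _ ≤ w y * linkSum F w x + (w x * linkSum F w x + edgeSum {S ∈ Fy | x ∉ S} w) := by gcongr
    _ = edgeSum Fy (Function.update w x (w x + w y)) := by
        rw [edgeSum_eq_mul_linkSum_add Fy _ x, linkSum_update_self, Function.update_self,
          edgeSum_update_of_notMem avoid_x, linkSum_filter_notMem hF]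
        ring

end EdgeSum

open Classical in
/-- The edges of the hypergraph `H` that lie inside the finite vertex set `V`. -/
def inducedEdges (H : Set (Finset α)) (V : Finset α) : Finset (Finset α) :=
  {S ∈ V.powerset | S ∈ H}

lemma mem_inducedEdges {H : Set (Finset α)} {V S : Finset α} :
    S ∈ inducedEdges H V ↔ S ⊆ V ∧ S ∈ H := by
  simp only [inducedEdges, mem_filter, mem_powerset]

lemma inducedEdges_erase [DecidableEq α] (H : Set (Finset α)) (V : Finset α) (y : α) :
    inducedEdges H (V.erase y) = {S ∈ inducedEdges H V | y ∉ S} := by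
  ext S
  simp only [mem_filter, mem_inducedEdges, subset_erase]
  tauto

lemma inducedEdges_mono (H : Set (Finset α)) {V W : Finset α} (hVW : V ⊆ W) :
    inducedEdges H V ⊆ inducedEdges H W := fun _ hS =>
  mem_inducedEdges.2 ⟨(mem_inducedEdges.1 hS).1.trans hVW, (mem_inducedEdges.1 hS).2⟩

/-- Every two vertices of `V` lie in a common edge of `H` inside `V`. -/
def PairCovering (H : Set (Finset α)) (V : Finset α) : Prop :=
  ∀ x ∈ V, ∀ y ∈ V, x ≠ y → ∃ S ∈ H, S ⊆ V ∧ x ∈ S ∧ y ∈ S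

/-- `κ` is a non-constant colouring of `V` for which each edge of `H` inside `V` is either
monochromatic or rainbow. -/
structure IsSplitting {ι : Type*} (H : Set (Finset α)) (V : Finset α) (κ : α → ι) : Prop where
  nonconstant : ∃ x ∈ V, ∃ y ∈ V, κ x ≠ κ y
  monochromatic_or_rainbow : ∀ S ∈ H, S ⊆ V → (∀ x ∈ S, ∀ y ∈ S, κ x = κ y) ∨ Set.InjOn κ S

/-- The number of edges when each vertex `x` of `V` is replaced by a cluster of `w x` points
spanning `h (w x)` further edges. -/
def blowupValue (H : Set (Finset α)) (h : ℕ → ℕ) (V : Finset α) (w : α → ℕ) : ℕ :=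
  edgeSum (inducedEdges H V) w + ∑ x ∈ V, h (w x)

lemma sum_erase_update_add [DecidableEq α] {M : Type*} [AddCommMonoid M] {V : Finset α}
    {x y : α} (hx : x ∈ V) (hy : y ∈ V) (hxy : x ≠ y) (w : α → ℕ) (n : ℕ) (g : ℕ → M) :
    ∑ z ∈ V.erase y, g (Function.update w x n z) + (g (w x) + g (w y)) =
      ∑ z ∈ V, g (w z) + g n := by
  have hxVy : x ∈ V.erase y := mem_erase.2 ⟨hxy, hx⟩
  have off_x : ∑ z ∈ (V.erase y).erase x, g (Function.update w x n z) =
      ∑ z ∈ (V.erase y).erase x, g (w z) :=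
    sum_congr rfl fun z hz => by rw [Function.update_of_ne (ne_of_mem_erase hz)]
  rw [← add_sum_erase _ _ hxVy, off_x, Function.update_self, ← add_sum_erase V _ hy,
    ← add_sum_erase (V.erase y) _ hxVy]
  abel

lemma blowupValue_le_erase [DecidableEq α] {H : Set (Finset α)} {h : ℕ → ℕ}
    (hadd : ∀ a b, h a + h b ≤ h (a + b)) {V : Finset α} {w : α → ℕ} {x y : α} (hx : x ∈ V)
    (hy : y ∈ V) (hxy : x ≠ y) (huncovered : ∀ S ∈ H, S ⊆ V → x ∈ S → y ∉ S)
    (hlink : linkSum (inducedEdges H V) w y ≤ linkSum (inducedEdges H V) w x) :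
    blowupValue H h V w ≤ blowupValue H h (V.erase y) (Function.update w x (w x + w y)) := by
  have hedges := edgeSum_le_edgeSum_update (w := w)
    (fun S hS => huncovered S (mem_inducedEdges.1 hS).2 (mem_inducedEdges.1 hS).1)
    (Nat.zero_le _) hlink
  have hvertices := sum_erase_update_add hx hy hxy w (w x + w y) h
  have := hadd (w x) (w y)
  unfold blowupValue
  rw [inducedEdges_erase]
  lia

lemma exists_erase_blowupValue_le [DecidableEq α] {H : Set (Finset α)} {h : ℕ → ℕ}
    (hadd : ∀ a b, h a + h b ≤ h (a + b)) {V : Finset α} (hV : ¬ PairCovering H V) (w : α → ℕ) :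
    ∃ v ∈ V, ∃ w' : α → ℕ, ∑ z ∈ V.erase v, w' z = ∑ z ∈ V, w z ∧
      blowupValue H h V w ≤ blowupValue H h (V.erase v) w' := by
  unfold PairCovering at hV
  push Not at hV
  obtain ⟨x, hx, y, hy, hxy, huncovered⟩ := hV
  wlog hlink : linkSum (inducedEdges H V) w y ≤ linkSum (inducedEdges H V) w x generalizing x y
  · exact this y hy x hx hxy.symm (fun S hS hSV hyS hxS => huncovered S hS hSV hxS hyS)
      (le_of_not_ge hlink)
  refine ⟨y, hy, Function.update w x (w x + w y), ?_,
    blowupValue_le_erase hadd hx hy hxy huncovered hlink⟩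
  have := sum_erase_update_add hx hy hxy w (w x + w y) id
  simp only [id] at this
  lia

variable {ι : Type*}

lemma eq_of_mem_of_mem {A : ι → Finset α} (hA : Pairwise fun i j => Disjoint (A i) (A j)) {x : α}
    {i j : ι} (hi : x ∈ A i) (hj : x ∈ A j) : i = j :=
  by_contra fun hij => disjoint_left.1 (hA hij) hi hj

variable [Fintype ι]

lemma exists_transversal_image_eq [DecidableEq α] {κ : α → ι} {S : Finset α}
    (hcard : #S = Fintype.card ι) (hκ : Set.InjOn κ S) :
    ∃ p : ι → α, univ.image p = S ∧ ∀ i, κ (p i) = i := by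
  classical
  have hsurj : S.image κ = univ :=
    eq_univ_of_card _ ((card_image_of_injOn hκ).trans hcard)
  have hfiber : ∀ i, ∃ x ∈ S, κ x = i := fun i => mem_image.1 (hsurj ▸ mem_univ i)
  choose p hpS hpκ using hfiber
  have hp : Function.Injective p := Function.LeftInverse.injective hpκ
  refine ⟨p, eq_of_subset_of_card_le (image_subset_iff.2 fun i _ => hpS i) ?_, hpκ⟩
  rw [card_image_of_injective _ hp, card_univ, hcard]

lemma IsSplitting.rainbow_or_monochromatic [DecidableEq α] [DecidableEq ι] {H : Set (Finset α)}
    (hH : H.Sized (Fintype.card ι)) {V : Finset α} {κ : α → ι} (hκ : IsSplitting H V κ)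
    {S : Finset α} (hS : S ∈ inducedEdges H V) :
    (∃ p ∈ Fintype.piFinset fun i => {x ∈ V | κ x = i}, univ.image p = S) ∨
      ∃ i, S ∈ inducedEdges H {x ∈ V | κ x = i} := by
  obtain ⟨hSV, hSH⟩ := mem_inducedEdges.1 hS
  by_cases hinj : Set.InjOn κ S
  · obtain ⟨p, rfl, hp⟩ := exists_transversal_image_eq (hH hSH) hinj
    exact Or.inl ⟨p, Fintype.mem_piFinset.2 fun i =>
      mem_filter.2 ⟨hSV (mem_image_of_mem p (mem_univ i)), hp i⟩, rfl⟩
  · have hmono := (hκ.monochromatic_or_rainbow S hSH hSV).resolve_right hinj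
    obtain ⟨x, hx⟩ : S.Nonempty := by
      rw [nonempty_iff_ne_empty]
      rintro rfl
      simp at hinj
    exact Or.inr ⟨κ x,
      mem_inducedEdges.2 ⟨fun y hy => mem_filter.2 ⟨hSV hy, hmono y hy x hx⟩, hSH⟩⟩

lemma edgeSum_inducedEdges_le [DecidableEq ι] {H : Set (Finset α)} (hH : H.Sized (Fintype.card ι))
    {V : Finset α} {κ : α → ι} (hκ : IsSplitting H V κ) (w : α → ℕ) :
    edgeSum (inducedEdges H V) w ≤ ∏ i, ∑ x ∈ V with κ x = i, w x +
      ∑ i, edgeSum (inducedEdges H {x ∈ V | κ x = i}) w := by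
  classical
  let rainbow : Finset (Finset α) :=
    (Fintype.piFinset fun i => {x ∈ V | κ x = i}).image fun p => univ.image p
  let monochromatic : Finset (Finset α) :=
    (univ.sigma fun i => inducedEdges H {x ∈ V | κ x = i}).image Sigma.snd
  have hcover : inducedEdges H V ⊆ rainbow ∪ monochromatic := fun S hS => by
    rcases hκ.rainbow_or_monochromatic hH hS with hrainbow | ⟨i, hi⟩
    · exact mem_union_left _ (mem_image.2 hrainbow)
    · exact mem_union_right _ (mem_image.2 ⟨⟨i, S⟩, mem_sigma.2 ⟨mem_univ i, hi⟩, rfl⟩)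
  have hrainbow : edgeSum rainbow w ≤ ∏ i, ∑ x ∈ V with κ x = i, w x := by
    rw [prod_univ_sum]
    refine (sum_image_le_of_nonneg fun _ _ => Nat.zero_le _).trans
      (sum_le_sum fun p hp => le_of_eq ?_)
    have hpκ : ∀ i, κ (p i) = i := fun i => (mem_filter.1 (Fintype.mem_piFinset.1 hp i)).2
    exact prod_image fun i _ j _ hij => (Function.LeftInverse.injective hpκ) hij
  have hmonochromatic : edgeSum monochromatic w ≤
      ∑ i, edgeSum (inducedEdges H {x ∈ V | κ x = i}) w :=
    (sum_image_le_of_nonneg fun _ _ => Nat.zero_le _).trans_eq (sum_sigma ..)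
  calc edgeSum (inducedEdges H V) w
      ≤ edgeSum (rainbow ∪ monochromatic) w := sum_le_sum_of_subset hcover
    _ ≤ edgeSum rainbow w + edgeSum monochromatic w :=
        (Nat.le_add_right _ _).trans_eq (sum_union_inter ..)
    _ ≤ _ := add_le_add hrainbow hmonochromatic

lemma add_le_of_prod_add_sum_le [Nontrivial ι] {h : ℕ → ℕ}
    (hprod : ∀ a : ι → ℕ, ∏ i, a i + ∑ i, h (a i) ≤ h (∑ i, a i)) (a b : ℕ) :
    h a + h b ≤ h (a + b) := by
  classical
  obtain ⟨i, j, hij⟩ := exists_pair_ne ι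
  let f : ι → ℕ := Pi.single i a + Pi.single j b
  calc h a + h b = ∑ k ∈ {i, j}, h (f k) := by simp [sum_pair hij, f, hij, hij.symm]
    _ ≤ ∑ k, h (f k) := sum_le_sum_of_subset (subset_univ _)
    _ ≤ h (∑ k, f k) := (Nat.le_add_left _ _).trans (hprod f)
    _ = h (a + b) := by simp [f, sum_add_distrib]

lemma blowupValue_le_of_isSplitting [DecidableEq ι] {H : Set (Finset α)}
    (hH : H.Sized (Fintype.card ι)) {h : ℕ → ℕ}
    (hprod : ∀ a : ι → ℕ, ∏ i, a i + ∑ i, h (a i) ≤ h (∑ i, a i))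
    {V : Finset α} {κ : α → ι} (hκ : IsSplitting H V κ) {w : α → ℕ}
    (hpart : ∀ i, blowupValue H h {x ∈ V | κ x = i} w ≤ h (∑ x ∈ V with κ x = i, w x)) :
    blowupValue H h V w ≤ h (∑ x ∈ V, w x) := by
  have hfiber : ∀ g : α → ℕ, ∑ i, ∑ x ∈ V with κ x = i, g x = ∑ x ∈ V, g x :=
    fun g => sum_fiberwise V κ g
  calc blowupValue H h V w
      ≤ ∏ i, ∑ x ∈ V with κ x = i, w x + ∑ i, edgeSum (inducedEdges H {x ∈ V | κ x = i}) w +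
          ∑ x ∈ V, h (w x) := Nat.add_le_add_right (edgeSum_inducedEdges_le hH hκ w) _
    _ = ∏ i, ∑ x ∈ V with κ x = i, w x + ∑ i, blowupValue H h {x ∈ V | κ x = i} w := by
        simp only [blowupValue, sum_add_distrib, hfiber, add_assoc]
    _ ≤ ∏ i, ∑ x ∈ V with κ x = i, w x + ∑ i, h (∑ x ∈ V with κ x = i, w x) := by
        gcongr with i
        exact hpart i
    _ ≤ h (∑ i, ∑ x ∈ V with κ x = i, w x) := hprod _
    _ = h (∑ x ∈ V, w x) := by rw [hfiber]

lemma blowupValue_eq_of_card_le_one {H : Set (Finset α)} {r : ℕ} (hH : H.Sized r) (hr : 1 < r)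
    (h : ℕ → ℕ) {V : Finset α} (hV : #V ≤ 1) (w : α → ℕ) :
    blowupValue H h V w = ∑ x ∈ V, h (w x) := by
  have hempty : inducedEdges H V = ∅ := by
    refine eq_empty_of_forall_notMem fun S hS => ?_
    obtain ⟨hSV, hSH⟩ := mem_inducedEdges.1 hS
    have := card_le_card hSV
    have := hH hSH
    lia
  simp [blowupValue, hempty, edgeSum]

theorem blowupValue_le [Nontrivial ι] {H : Set (Finset α)} (hH : H.Sized (Fintype.card ι))
    {h : ℕ → ℕ} (hprod : ∀ a : ι → ℕ, ∏ i, a i + ∑ i, h (a i) ≤ h (∑ i, a i))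
    (hsplit : ∀ V : Finset α, V.Nontrivial → PairCovering H V → ∃ κ : α → ι, IsSplitting H V κ)
    (V : Finset α) (w : α → ℕ) : blowupValue H h V w ≤ h (∑ x ∈ V, w x) := by
  classical
  have hadd := add_le_of_prod_add_sum_le hprod
  induction V using Finset.strongInduction generalizing w with
  | H V ih =>
  by_cases hV : V.Nontrivial
  · by_cases hcov : PairCovering H V
    · obtain ⟨κ, hκ⟩ := hsplit V hV hcov
      refine blowupValue_le_of_isSplitting hH hprod hκ fun i => ih _ ?_ w
      obtain ⟨x, hx, y, hy, hxy⟩ := hκ.nonconstant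
      refine filter_ssubset.2 ?_
      by_cases hxi : κ x = i
      · exact ⟨y, hy, fun hyi => hxy (hxi.trans hyi.symm)⟩
      · exact ⟨x, hx, hxi⟩
    · obtain ⟨v, hv, w', hsum, hle⟩ := exists_erase_blowupValue_le hadd hcov w
      exact hsum ▸ hle.trans (ih _ (erase_ssubset hv) w')
  · have hcard : #V ≤ 1 := not_lt.1 fun hlt => hV (one_lt_card_iff_nontrivial.1 hlt)
    rw [blowupValue_eq_of_card_le_one hH Fintype.one_lt_card h hcard]
    rcases V.eq_empty_or_nonempty with rfl | hne
    · simp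
    · obtain ⟨x, rfl⟩ := card_eq_one.1 (hcard.antisymm hne.card_pos)
      simp

theorem card_inducedEdges_le [Nontrivial ι] {H : Set (Finset α)}
    (hH : H.Sized (Fintype.card ι)) {h : ℕ → ℕ}
    (hprod : ∀ a : ι → ℕ, ∏ i, a i + ∑ i, h (a i) ≤ h (∑ i, a i))
    (hsplit : ∀ V : Finset α, V.Nontrivial → PairCovering H V → ∃ κ : α → ι, IsSplitting H V κ)
    (V : Finset α) : #(inducedEdges H V) ≤ h #V := by
  have hle := blowupValue_le hH hprod hsplit V fun _ => 1
  simp only [blowupValue, edgeSum, prod_const_one, ← card_eq_sum_ones] at hle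
  exact (Nat.le_add_right _ _).trans hle

lemma card_image_piFinset [DecidableEq α] [DecidableEq ι] {A : ι → Finset α}
    (hA : Pairwise fun i j => Disjoint (A i) (A j)) :
    #((Fintype.piFinset A).image fun p => univ.image p) = ∏ i, #(A i) := by
  rw [card_image_of_injOn, Fintype.card_piFinset]
  intro p hp q hq hpq
  have hpA := Fintype.mem_piFinset.1 (mem_coe.1 hp)
  have hqA := Fintype.mem_piFinset.1 (mem_coe.1 hq)
  funext i
  obtain ⟨j, -, hj⟩ :=
    mem_image.1 ((Finset.ext_iff.1 hpq (p i)).1 (mem_image_of_mem p (mem_univ i)))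
  obtain rfl : j = i := eq_of_mem_of_mem hA (hqA j) (hj ▸ hpA i)
  exact hj.symm

theorem prod_card_add_sum_card_inducedEdges_le [DecidableEq α] [Nontrivial ι] {H : Set (Finset α)}
    (hH : H.Sized (Fintype.card ι)) {A : ι → Finset α}
    (hA : Pairwise fun i j => Disjoint (A i) (A j))
    (hrainbow : ∀ p : ι → α, (∀ i, p i ∈ A i) → univ.image p ∈ H) :
    ∏ i, #(A i) + ∑ i, #(inducedEdges H (A i)) ≤ #(inducedEdges H (univ.biUnion A)) := by
  classical
  let rainbow : Finset (Finset α) := (Fintype.piFinset A).image fun p => univ.image p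
  have hdisj_parts : (↑(univ : Finset ι) : Set ι).PairwiseDisjoint
      fun i => inducedEdges H (A i) := by
    refine fun i _ j _ hij => disjoint_left.2 fun S hSi hSj => hij ?_
    obtain ⟨hSi, hSH⟩ := mem_inducedEdges.1 hSi
    obtain ⟨x, hx⟩ := card_pos.1 (hH hSH ▸ Fintype.card_pos : 0 < #S)
    exact eq_of_mem_of_mem hA (hSi hx) ((mem_inducedEdges.1 hSj).1 hx)
  have hdisj_rainbow : Disjoint rainbow (univ.biUnion fun i => inducedEdges H (A i)) := by
    refine disjoint_left.2 fun S hSr hSm => ?_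
    obtain ⟨p, hp, rfl⟩ := mem_image.1 hSr
    obtain ⟨i, -, hi⟩ := mem_biUnion.1 hSm
    obtain ⟨j, hji⟩ := exists_ne i
    exact hji (eq_of_mem_of_mem hA (Fintype.mem_piFinset.1 hp j)
      ((mem_inducedEdges.1 hi).1 (mem_image_of_mem p (mem_univ j))))
  have hsub : rainbow ∪ (univ.biUnion fun i => inducedEdges H (A i)) ⊆
      inducedEdges H (univ.biUnion A) := by
    refine union_subset (image_subset_iff.2 fun p hp => ?_)
      (biUnion_subset.2 fun i hi => inducedEdges_mono H (subset_biUnion_of_mem A hi))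
    have hpA := Fintype.mem_piFinset.1 hp
    exact mem_inducedEdges.2 ⟨image_subset_iff.2 fun i hi => mem_biUnion.2 ⟨i, hi, hpA i⟩,
      hrainbow p hpA⟩
  rw [← card_image_piFinset hA, ← card_biUnion hdisj_parts, ← card_union_of_disjoint hdisj_rainbow]
  exact card_le_card hsub

end Hypergraph

section PrimitiveSixthRoot

variable {w : ℂ}

lemma norm_eq_one_of_sq_eq (hw : w ^ 2 = w - 1) : ‖w‖ = 1 := by
  have hcube : w ^ 3 = -1 := by linear_combination (w + 1) * hw
  have hpow : w ^ 6 = 1 := by linear_combination (w ^ 3 - 1) * hcube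
  exact Complex.norm_eq_one_of_pow_eq_one hpow (by norm_num)

lemma one_sub_sq_eq (hw : w ^ 2 = w - 1) : (1 - w) ^ 2 = 1 - w - 1 := by
  linear_combination hw

lemma re_eq_half_and_im_sq_eq (hw : w ^ 2 = w - 1) : w.re = 1 / 2 ∧ w.im ^ 2 = 3 / 4 := by
  have hre : w.re * w.re - w.im * w.im = w.re - 1 := by
    simpa [sq] using congrArg Complex.re hw
  have him : w.im * (2 * w.re - 1) = 0 := by
    have := congrArg Complex.im hw
    simp only [sq, Complex.mul_im, Complex.sub_im, Complex.one_im] at this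
    linarith
  rcases mul_eq_zero.1 him with h0 | h0
  · rw [h0] at hre
    nlinarith [sq_nonneg (w.re - 1 / 2)]
  · have hhalf : w.re = 1 / 2 := by linarith
    rw [hhalf] at hre
    exact ⟨hhalf, by linarith⟩

lemma eq_or_eq_one_sub_of_sq_eq {v : ℂ} (hw : w ^ 2 = w - 1) (hv : v ^ 2 = v - 1) :
    v = w ∨ v = 1 - w := by
  have hfactor : (v - w) * (v - (1 - w)) = 0 := by linear_combination hv - hw
  exact (mul_eq_zero.1 hfactor).imp sub_eq_zero.1 sub_eq_zero.1

lemma exp_sq_eq_of_abs_eq {φ : ℝ} (hφ : |φ| = π / 3) :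
    Complex.exp (φ * Complex.I) ^ 2 = Complex.exp (φ * Complex.I) - 1 := by
  have hcos : Real.cos φ = 1 / 2 := by rw [← Real.cos_abs, hφ, Real.cos_pi_div_three]
  have hsin : Real.sin φ ^ 2 = 3 / 4 := by rw [Real.sin_sq, hcos]; norm_num
  have hsin' : Complex.sin φ ^ 2 = 3 / 4 := by
    rw [← Complex.ofReal_sin, ← Complex.ofReal_pow, hsin]
    norm_num
  rw [Complex.exp_mul_I, ← Complex.ofReal_cos, hcos]
  push_cast
  linear_combination Complex.I ^ 2 * hsin' + 3 / 4 * Complex.I_sq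

end PrimitiveSixthRoot

section Clusters

open scoped RealInnerProductSpace in
lemma sq_norm_eq_inner_one_inner {w : ℂ} (hw : w ^ 2 = w - 1) (q : ℂ) :
    ‖q‖ ^ 2 = (⟪q, 1⟫ + ⟪q, w⟫) ^ 2 / 3 + (⟪q, w⟫ - ⟪q, 1⟫) ^ 2 := by
  obtain ⟨hre, him⟩ := re_eq_half_and_im_sq_eq hw
  simp only [Complex.sq_norm, Complex.normSq_apply, Complex.inner, Complex.mul_re, Complex.conj_re,
    Complex.conj_im, Complex.one_re, Complex.one_im, hre]
  linear_combination (-4 / 3 * q.im ^ 2) * him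

lemma sq_div_three_add_sq_sub_mul_le {s d : ℝ} (h1 : s ^ 2 / 3 + d ^ 2 - s + |d| ≤ 0.045)
    (h2 : s ^ 2 / 3 + d ^ 2 + 2 * |d| ≤ 0.09) : s ^ 2 / 3 + d ^ 2 - 0.16 * s ≤ 0.0132 := by
  have hs_sq := sq_nonneg s
  have hd_sq := sq_nonneg d
  have hd : |d| ≤ 0.045 := by linarith
  have hs_lower : -0.045 ≤ s := by linarith [abs_nonneg d]
  have hs_upper : s ≤ 0.52 := by nlinarith [abs_nonneg d]
  have hd_upper : d ^ 2 ≤ 0.045 ^ 2 := sq_le_sq' (abs_le.1 hd).1 (abs_le.1 hd).2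
  nlinarith [mul_nonneg (sub_nonneg.2 hs_lower) (sub_nonneg.2 hs_upper)]

open scoped RealInnerProductSpace in
lemma norm_sub_corner_le {w q : ℂ} (hw : w ^ 2 = w - 1) (h1 : ‖q - 1‖ ≤ 1.022)
    (h2 : ‖q - w‖ ≤ 1.022) (h3 : ‖q - (w - 1)‖ ≤ 1.044) (h4 : ‖q + (w - 1)‖ ≤ 1.044) :
    ‖q - (0.08 : ℝ) • (1 + w)‖ ≤ 0.18 := by
  have hw0 := norm_eq_one_of_sq_eq hw
  have hw1 : ‖w - 1‖ = 1 := by rw [← hw, norm_pow, hw0, one_pow]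
  have hw2 : ‖1 + w‖ ^ 2 = 3 := by
    have := parallelogram_law_with_norm ℝ w 1
    rw [hw1, hw0, norm_one, add_comm w] at this
    linarith
  have hN := sq_norm_eq_inner_one_inner hw q
  rw [← sq_le_sq₀ (norm_nonneg _) (by norm_num)] at h1 h2 h3 h4 ⊢
  rw [norm_sub_sq_real] at h1 h2 h3 ⊢
  rw [norm_add_sq_real] at h4
  simp only [inner_sub_right, inner_add_right, inner_smul_right, norm_smul, mul_pow, hw0, hw1, hw2,
    norm_one, hN] at h1 h2 h3 h4 ⊢
  set A := ⟪q, 1⟫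
  set B := ⟪q, w⟫
  have := sq_div_three_add_sq_sub_mul_le (s := A + B) (d := B - A) ?_ ?_
  · norm_num
    linarith
  · rcases abs_cases (B - A) with ⟨h, -⟩ | ⟨h, -⟩ <;> rw [h] <;> linarith
  · rcases abs_cases (B - A) with ⟨h, -⟩ | ⟨h, -⟩ <;> rw [h] <;> linarith

/-- The apexes of the equilateral triangles erected on the sides of the triangle `a`, on the side
determined by the primitive sixth root of unity `w`; if `a` is itself equilateral with
`a 2 - a 0 = w * (a 1 - a 0)`, these triangles point outwards. -/
def outerApex (w : ℂ) (a : Fin 3 → ℂ) (i : Fin 3) : ℂ :=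
  w * a i + (1 - w) * a (i + 1)

lemma norm_update_sub_le {ι E : Type*} [DecidableEq ι] [SeminormedAddCommGroup E] (e : ι → E)
    (j : ι) (z : E) (i : ι) :
    ‖Function.update e j z i - e i‖ ≤ ‖z - e j‖ := by
  rcases eq_or_ne i j with rfl | hij
  · rw [Function.update_self]
  · simp [Function.update_of_ne hij]

lemma norm_outerApex_update_sub_le {w : ℂ} (hw : w ^ 2 = w - 1) (e : Fin 3 → ℂ) (j : Fin 3)
    (z : ℂ) (i : Fin 3) :
    ‖outerApex w (Function.update e j z) i - outerApex w e i‖ ≤ ‖z - e j‖ := by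
  have hw' := norm_eq_one_of_sq_eq (one_sub_sq_eq hw)
  have hdiff : outerApex w (Function.update e j z) i - outerApex w e i =
      w * (Function.update e j z i - e i) +
        (1 - w) * (Function.update e j z (i + 1) - e (i + 1)) := by
    unfold outerApex
    ring
  rcases eq_or_ne i j with rfl | hij
  · have hij : i + 1 ≠ i := by lia
    rw [hdiff, Function.update_of_ne hij, sub_self, mul_zero, add_zero, norm_mul,
      norm_eq_one_of_sq_eq hw, one_mul]
    exact norm_update_sub_le e i z i
  · rw [hdiff, Function.update_of_ne hij, sub_self, mul_zero, zero_add, norm_mul, hw', one_mul]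
    exact norm_update_sub_le e j z (i + 1)

lemma norm_sub_le_of_norm_sub_rotate_le {v a b p q : ℂ} {δ R : ℝ} (hv : v ^ 2 = v - 1)
    (hδ : 0 ≤ δ) (hpa : ‖p - a‖ ≤ R) (hqb : ‖q - b‖ ≤ R)
    (hq : ‖q - a - v * (p - a)‖ ≤ δ * ‖p - a‖) : ‖p - (v * a + (1 - v) * b)‖ ≤ (1 + δ) * R :=
  calc ‖p - (v * a + (1 - v) * b)‖ = ‖v * (p - (v * a + (1 - v) * b))‖ := by
        rw [norm_mul, norm_eq_one_of_sq_eq hv, one_mul]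
    _ = ‖(q - b) - (q - a - v * (p - a))‖ := by
        congr 1
        linear_combination (b - a) * hv
    _ ≤ ‖q - b‖ + ‖q - a - v * (p - a)‖ := norm_sub_le _ _
    _ ≤ R + δ * R := by gcongr; exact hq.trans (by gcongr)
    _ = (1 + δ) * R := by ring

/-- `z` is close to an apex of one of the two equilateral triangles on the segment from `x` to `y`,
with an error of at most `δ` relative to the length of that segment. -/
def NearEquilateral (δ : ℝ) (x y z : ℂ) : Prop :=
  ∃ w : ℂ, w ^ 2 = w - 1 ∧ ‖z - x - w * (y - x)‖ ≤ δ * ‖y - x‖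

lemma nearEquilateral_self (δ : ℝ) (x : ℂ) : NearEquilateral δ x x x :=
  ⟨_, exp_sq_eq_of_abs_eq (abs_of_pos (by positivity : 0 < π / 3)), by simp⟩

lemma NearEquilateral.dist_le {δ : ℝ} {x y z : ℂ} (h : NearEquilateral δ x y z) :
    dist z x ≤ (1 + δ) * dist y x := by
  obtain ⟨w, hw, hz⟩ := h
  calc dist z x = ‖w * (y - x) + (z - x - w * (y - x))‖ := by rw [dist_eq_norm]; congr 1; ring
    _ ≤ ‖w * (y - x)‖ + ‖z - x - w * (y - x)‖ := norm_add_le _ _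
    _ ≤ ‖y - x‖ + δ * ‖y - x‖ := by
        rw [norm_mul, norm_eq_one_of_sq_eq hw, one_mul]
        gcongr
    _ = (1 + δ) * dist y x := by rw [dist_eq_norm]; ring

lemma exists_and_add_two_of_forall_or {D : Fin 3 → Prop} (hD : ∀ i, D i ∨ D (i + 2)) :
    ∃ i, D i ∧ D (i + 2) := by
  have h0 : D 0 ∨ D 2 := hD 0
  have h1 : D 1 ∨ D 0 := hD 1
  have h2 : D 2 ∨ D 1 := hD 2
  obtain h | h | h : (D 0 ∧ D 2) ∨ (D 1 ∧ D 0) ∨ (D 2 ∧ D 1) := by tauto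
  exacts [⟨0, h⟩, ⟨1, h⟩, ⟨2, h⟩]

lemma exists_norm_sub_outerApex_le {w p : ℂ} {δ R : ℝ} {X : Set ℂ} {a : Fin 3 → ℂ}
    (hw : w ^ 2 = w - 1) (hδ : 0 ≤ δ) (hdiam : ∀ x ∈ X, ∀ y ∈ X, ‖x - y‖ ≤ R)
    (hcover : ∀ x ∈ X, ∀ y ∈ X, ∃ z ∈ X, NearEquilateral δ x y z) (ha : ∀ i, a i ∈ X)
    (hp : p ∈ X) :
    ∃ i, ‖p - outerApex w a i‖ ≤ (1 + δ) * R ∧ ‖p - outerApex w a (i + 2)‖ ≤ (1 + δ) * R := by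
  have hvertex : ∀ i, ‖p - outerApex w a i‖ ≤ (1 + δ) * R ∨
      ‖p - outerApex w a (i + 2)‖ ≤ (1 + δ) * R := by
    intro i
    obtain ⟨q, hq, v, hv, hqv⟩ := hcover (a i) (ha i) p hp
    have hbound : ∀ j, ‖p - (v * a i + (1 - v) * a j)‖ ≤ (1 + δ) * R := fun j =>
      norm_sub_le_of_norm_sub_rotate_le hv hδ (hdiam p hp _ (ha i)) (hdiam q hq _ (ha j)) hqv
    rcases eq_or_eq_one_sub_of_sq_eq hw hv with rfl | rfl
    · exact Or.inl (hbound (i + 1))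
    · right
      convert hbound (i + 2) using 2
      have : i + 2 + 1 = i := by lia
      rw [outerApex, this]
      ring
  exact exists_and_add_two_of_forall_or hvertex

/-- `e` lists the vertices of an equilateral triangle with side length `R`, in the orientation
given by the primitive sixth root of unity `w`. -/
structure IsEquilateral (w : ℂ) (R : ℝ) (e : Fin 3 → ℂ) : Prop where
  rotate : ∀ i, e (i + 2) - e i = w * (e (i + 1) - e i)
  side : ∀ i, ‖e (i + 1) - e i‖ = R

lemma isEquilateral_vecCons {w : ℂ} (hw : w ^ 2 = w - 1) (x y : ℂ) :
    IsEquilateral w ‖y - x‖ ![x, y, x + w * (y - x)] := by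
  have hnorm := norm_eq_one_of_sq_eq hw
  have hnorm' := norm_eq_one_of_sq_eq (one_sub_sq_eq hw)
  refine ⟨Fin.forall_fin_succ.2 ⟨?_, Fin.forall_fin_two.2 ⟨?_, ?_⟩⟩,
    Fin.forall_fin_succ.2 ⟨?_, Fin.forall_fin_two.2 ⟨?_, ?_⟩⟩⟩
  · simp
  · change x - y = w * (x + w * (y - x) - y)
    linear_combination -(y - x) * hw
  · change y - (x + w * (y - x)) = w * (x - (x + w * (y - x)))
    linear_combination (y - x) * hw
  · simp
  · change ‖x + w * (y - x) - y‖ = ‖y - x‖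
    rw [show x + w * (y - x) - y = -((1 - w) * (y - x)) by ring, norm_neg, norm_mul, hnorm',
      one_mul]
  · change ‖x - (x + w * (y - x))‖ = ‖y - x‖
    rw [sub_add_cancel_left, norm_neg, norm_mul, hnorm, one_mul]

lemma IsEquilateral.norm_sub {w : ℂ} {R : ℝ} {e : Fin 3 → ℂ} (he : IsEquilateral w R e)
    {i j : Fin 3} (hij : i ≠ j) : ‖e i - e j‖ = R := by
  obtain rfl | rfl : i = j + 1 ∨ j = i + 1 := by lia
  · exact he.side j
  · rw [norm_sub_rev, he.side]

/-- The point near the vertex `e i` around which the points of a pair-covering set of diameter at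
most the side length of `e` cluster.  These points fill a thin region along the bisector at `e i`
which extends further into the triangle than out of it, so the vertex is shifted inwards by `0.08`
times each of the two sides at `e i`. -/
def clusterCentre (e : Fin 3 → ℂ) (i : Fin 3) : ℂ :=
  (0.76 : ℝ) • e i + (0.08 : ℝ) • ∑ j, e j

lemma IsEquilateral.norm_clusterCentre_sub {w : ℂ} {R : ℝ} {e : Fin 3 → ℂ}
    (he : IsEquilateral w R e) {i j : Fin 3} (hij : i ≠ j) :
    ‖clusterCentre e i - clusterCentre e j‖ = 0.76 * R := by
  rw [clusterCentre, clusterCentre, add_sub_add_right_eq_sub, ← smul_sub, norm_smul,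
    he.norm_sub hij, Real.norm_of_nonneg (by norm_num)]

lemma IsEquilateral.norm_sub_clusterCentre_le {w p : ℂ} {R : ℝ} {e : Fin 3 → ℂ} {i : Fin 3}
    (he : IsEquilateral w R e) (hw : w ^ 2 = w - 1) (hR : 0 < R)
    (hvertex : ∀ j, ‖p - e j‖ ≤ 1.022 * R) (hapex : ‖p - outerApex w e i‖ ≤ 1.044 * R)
    (hapex' : ‖p - outerApex w e (i + 2)‖ ≤ 1.044 * R) :
    ‖p - clusterCentre e i‖ ≤ 0.18 * R := by
  set u := e (i + 1) - e i with hu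
  have hu_norm : ‖u‖ = R := he.side i
  have hu0 : u ≠ 0 := norm_pos_iff.1 (hu_norm ▸ hR)
  have hrot := he.rotate i
  have hindex : i + 2 + 1 = i := by lia
  obtain ⟨q, hq⟩ : ∃ q, p - e i = q * u := ⟨(p - e i) / u, (div_mul_cancel₀ _ hu0).symm⟩
  have hscale : ∀ z c : ℂ, p - z = (q - c) * u → ∀ r : ℝ, ‖p - z‖ ≤ r * R ↔ ‖q - c‖ ≤ r := by
    intro z c hz r
    rw [hz, norm_mul, hu_norm, mul_le_mul_iff_left₀ hR]
  have hsum : ∑ j, e j = e i + e (i + 1) + e (i + 2) := by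
    fin_cases i <;> simp [Fin.sum_univ_three] <;> ring
  rw [hscale _ ((0.08 : ℝ) • (1 + w))]
  · apply norm_sub_corner_le hw
    · rw [← hscale (e (i + 1))]
      · exact hvertex _
      · linear_combination hq
    · rw [← hscale (e (i + 2))]
      · exact hvertex _
      · linear_combination hq - hrot
    · rw [← hscale (outerApex w e (i + 2))]
      · exact hapex'
      · rw [outerApex, hindex]
        linear_combination hq - w * hrot - u * hw
    · rw [← sub_neg_eq_add, ← hscale (outerApex w e i)]
      · exact hapex
      · rw [outerApex]
        linear_combination hq
  · simp only [clusterCentre, hsum, Complex.real_smul]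
    push_cast
    linear_combination hq - 0.08 * hrot

theorem exists_clusterCentres {X : Set ℂ} {a b : ℂ} (ha : a ∈ X) (hb : b ∈ X) (hab : a ≠ b)
    (hdiam : ∀ x ∈ X, ∀ y ∈ X, dist x y ≤ dist a b)
    (hcover : ∀ x ∈ X, ∀ y ∈ X, ∃ z ∈ X, NearEquilateral 0.022 x y z) :
    ∃ m : Fin 3 → ℂ, (∀ i j, i ≠ j → dist (m i) (m j) = 0.76 * dist a b) ∧
      ∀ p ∈ X, ∃ i, dist p (m i) ≤ 0.18 * dist a b := by
  obtain ⟨c, hc, w, hw, hcw⟩ := hcover a ha b hb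
  set R := dist a b with hR
  have hRb : ‖b - a‖ = R := by rw [hR, dist_comm, dist_eq_norm]
  set e : Fin 3 → ℂ := ![a, b, a + w * (b - a)] with he_def
  have he : IsEquilateral w R e := hRb ▸ isEquilateral_vecCons hw a b
  have hclose : ‖c - e 2‖ ≤ 0.022 * R := by
    rw [← hRb]
    convert hcw using 2
    simp [he_def, sub_sub]
  have hvertices : ∀ i, Function.update e 2 c i ∈ X :=
    Fin.forall_fin_succ.2 ⟨by simpa [he_def] using ha, Fin.forall_fin_two.2
      ⟨by simpa [he_def] using hb, by simpa [he_def] using hc⟩⟩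
  refine ⟨clusterCentre e, fun i j hij => ?_, fun p hp => ?_⟩
  · rw [dist_eq_norm, he.norm_clusterCentre_sub hij]
  simp only [dist_eq_norm] at hdiam ⊢
  obtain ⟨i, hi, hi'⟩ := exists_norm_sub_outerApex_le hw (by norm_num) hdiam hcover hvertices hp
  refine ⟨i, he.norm_sub_clusterCentre_le hw (dist_pos.2 hab) (fun j => ?_) ?_ ?_⟩
  · linarith [norm_sub_le_norm_sub_add_norm_sub p (Function.update e 2 c j) (e j),
      norm_update_sub_le e 2 c j, hdiam p hp _ (hvertices j)]
  · linarith [norm_sub_le_norm_sub_add_norm_sub p (outerApex w (Function.update e 2 c) i)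
      (outerApex w e i), norm_outerApex_update_sub_le hw e 2 c i]
  · linarith [norm_sub_le_norm_sub_add_norm_sub p (outerApex w (Function.update e 2 c) (i + 2))
      (outerApex w e (i + 2)), norm_outerApex_update_sub_le hw e 2 c (i + 2)]

end Clusters

section Splitting

lemma monochromatic_or_injOn_of_dist_le {α ι M : Type*} [PseudoMetricSpace M] {f : α → M}
    {κ : α → ι} {m : ι → M} {S : Set α} {ρ L D : ℝ} (hL : 0 ≤ L) (hD : 2 * ρ + L * (2 * ρ) < D)
    (hκ : ∀ x ∈ S, dist (f x) (m (κ x)) ≤ ρ) (hm : ∀ i j, i ≠ j → D ≤ dist (m i) (m j))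
    (hS : ∀ x ∈ S, ∀ y ∈ S, ∀ z ∈ S, x ≠ y → z ≠ x → z ≠ y →
      dist (f z) (f x) ≤ L * dist (f y) (f x)) :
    (∀ x ∈ S, ∀ y ∈ S, κ x = κ y) ∨ Set.InjOn κ S := by
  refine or_iff_not_imp_right.2 fun hinj => ?_
  simp only [Set.InjOn, not_forall] at hinj
  obtain ⟨x, hx, y, hy, hκxy, hxy⟩ := hinj
  have hshort : dist (f y) (f x) ≤ 2 * ρ := by
    have hκy := hκ y hy
    rw [← hκxy] at hκy
    linarith [dist_triangle_right (f y) (f x) (m (κ x)), hκ x hx]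
  suffices heq : ∀ z ∈ S, κ z = κ x from fun z hz z' hz' => (heq z hz).trans (heq z' hz').symm
  intro z hz
  by_cases hzx : z = x
  · rw [hzx]
  by_cases hzy : z = y
  · rw [hzy, hκxy]
  by_contra hne
  have hfar : D ≤ dist (m (κ z)) (m (κ x)) := hm _ _ hne
  have hlink : dist (f z) (f x) ≤ L * (2 * ρ) :=
    (hS x hx y hy z hz hxy hzx hzy).trans (by gcongr)
  linarith [dist_triangle4 (m (κ z)) (f z) (f x) (m (κ x)), dist_comm (m (κ z)) (f z), hκ z hz,
    hκ x hx]

lemma exists_diametral_pair {α M : Type*} [PseudoMetricSpace M] (f : α → M) {V : Finset α}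
    (hV : V.Nonempty) :
    ∃ a ∈ V, ∃ b ∈ V, ∀ x ∈ V, ∀ y ∈ V, dist (f x) (f y) ≤ dist (f a) (f b) := by
  obtain ⟨⟨a, b⟩, hab, hmax⟩ :=
    exists_max_image (V ×ˢ V) (fun p => dist (f p.1) (f p.2)) (hV.product hV)
  obtain ⟨ha, hb⟩ := mem_product.1 hab
  exact ⟨a, ha, b, hb, fun x hx y hy => hmax (x, y) (mem_product.2 ⟨hx, hy⟩)⟩

lemma PairCovering.exists_nearEquilateral {α : Type*} {H : Set (Finset α)} {V : Finset α}
    (hV : PairCovering H V) (hH : H.Sized 3) {f : α → ℂ} {δ : ℝ}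
    (hedge : ∀ S ∈ H, ∀ x ∈ S, ∀ y ∈ S, ∀ z ∈ S, x ≠ y → z ≠ x → z ≠ y →
      NearEquilateral δ (f x) (f y) (f z)) {x y : α} (hx : x ∈ V) (hy : y ∈ V) :
    ∃ z ∈ V, NearEquilateral δ (f x) (f y) (f z) := by
  classical
  rcases eq_or_ne x y with rfl | hxy
  · exact ⟨x, hx, nearEquilateral_self δ (f x)⟩
  obtain ⟨S, hSH, hSV, hxS, hyS⟩ := hV x hx y hy hxy
  obtain ⟨z, hzS, hz⟩ := exists_mem_notMem_of_card_lt_card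
    (card_le_two.trans_lt (hH hSH ▸ Nat.lt_succ_self 2) : #{x, y} < #S)
  simp only [mem_insert, mem_singleton, not_or] at hz
  exact ⟨z, hSV hzS, hedge S hSH x hxS y hyS z hzS hxy hz.1 hz.2⟩

theorem PairCovering.exists_isSplitting {α : Type*} {H : Set (Finset α)} {V : Finset α}
    (hV : PairCovering H V) (hH : H.Sized 3) {f : α → ℂ} (hf : f.Injective)
    (hedge : ∀ S ∈ H, ∀ x ∈ S, ∀ y ∈ S, ∀ z ∈ S, x ≠ y → z ≠ x → z ≠ y →
      NearEquilateral 0.022 (f x) (f y) (f z)) (hnt : V.Nontrivial) :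
    ∃ κ : α → Fin 3, IsSplitting H V κ := by
  obtain ⟨a, ha, b, hb, hmax⟩ := exists_diametral_pair f hnt.nonempty
  have hpos : 0 < dist (f a) (f b) := by
    obtain ⟨x, hx, y, hy, hxy⟩ := hnt
    exact (dist_pos.2 (hf.ne hxy)).trans_le (hmax x hx y hy)
  obtain ⟨m, hm, hnear⟩ := exists_clusterCentres (X := f '' V) (Set.mem_image_of_mem f ha)
    (Set.mem_image_of_mem f hb) (dist_pos.1 hpos)
    (Set.forall_mem_image.2 fun x hx => Set.forall_mem_image.2 fun y hy => hmax x hx y hy)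
    (Set.forall_mem_image.2 fun x hx => Set.forall_mem_image.2 fun y hy =>
      Set.exists_mem_image.2 (hV.exists_nearEquilateral hH hedge hx hy))
  have hcolour : ∀ x, ∃ i, x ∈ V → dist (f x) (m i) ≤ 0.18 * dist (f a) (f b) := fun x => by
    by_cases hx : x ∈ V
    · exact (hnear _ (Set.mem_image_of_mem f hx)).imp fun _ hi _ => hi
    · exact ⟨0, fun h => absurd h hx⟩
  choose κ hκ using hcolour
  refine ⟨κ, ⟨a, ha, b, hb, fun hab => ?_⟩, fun S hSH hSV => ?_⟩
  · have hκb := hκ b hb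
    rw [← hab] at hκb
    linarith [dist_triangle_right (f a) (f b) (m (κ a)), hκ a ha]
  · refine monochromatic_or_injOn_of_dist_le (f := f) (m := m) (L := 1 + 0.022) (by norm_num) ?_
      (fun x hx => hκ x (hSV hx)) (fun i j hij => (hm i j hij).ge)
      fun x hx y hy z hz hxy hzx hzy => (hedge S hSH x hx y hy z hz hxy hzx hzy).dist_le
    linarith

end Splitting

section Angles

lemma sq_sub_add_three_mul_sq_le {x y z η : ℝ} (hsum : x + y + z = 0) (hx : |x| ≤ η)
    (hy : |y| ≤ η) (hz : |z| ≤ η) : (y - z) ^ 2 + 3 * x ^ 2 ≤ 4 * η ^ 2 := by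
  obtain rfl : x = -(y + z) := by linarith
  rw [abs_neg] at hx
  have hx' : (y + z) ^ 2 ≤ η ^ 2 := sq_le_sq' (abs_le.1 hx).1 (abs_le.1 hx).2
  have hy' : y ^ 2 ≤ η ^ 2 := sq_le_sq' (abs_le.1 hy).1 (abs_le.1 hy).2
  have hz' : z ^ 2 ≤ η ^ 2 := sq_le_sq' (abs_le.1 hz).1 (abs_le.1 hz).2
  have hsplit : 0 ≤ y * z ∨ y * (y + z) ≤ 0 ∨ z * (y + z) ≤ 0 := by
    by_contra! h
    nlinarith [h.1, mul_pos h.2.1 h.2.2, sq_nonneg (y + z)]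
  rcases hsplit with h | h | h <;> nlinarith

lemma abs_sin_sub_sin_le_of_near {a b c : ℝ} (hsum : a + b + c = π)
    (ha : |a - π / 3| ≤ π / 180) (hc : |c - π / 3| ≤ π / 180) :
    |Real.sin b - Real.sin c| ≤ 0.6 * |b - c| * Real.sin c := by
  have hπ := Real.pi_lt_d4
  have hfactor : Real.sin b - Real.sin c = 2 * Real.sin ((b - c) / 2) * Real.sin (a / 2) := by
    rw [Real.sin_sub_sin, show (b + c) / 2 = π / 2 - a / 2 by linarith, Real.cos_pi_div_two_sub]
  have hsin_half : |Real.sin (a / 2)| ≤ 0.50874 := by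
    have hlip := Real.abs_sin_sub_sin_le (a / 2) (π / 6)
    rw [Real.sin_pi_div_six, show a / 2 - π / 6 = (a - π / 3) / 2 by ring, abs_div, abs_two] at hlip
    have := abs_le.1 hlip
    exact abs_le.2 ⟨by linarith, by linarith⟩
  have hsin_c : 0.848 ≤ Real.sin c := by
    have hlip := Real.abs_sin_sub_sin_le c (π / 3)
    rw [Real.sin_pi_div_three] at hlip
    have hsqrt : 1.732 ≤ √3 := Real.le_sqrt_of_sq_le (by norm_num)
    linarith [(abs_le.1 hlip).1]
  have hsin_diff : |Real.sin ((b - c) / 2)| ≤ |b - c| / 2 := by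
    simpa [abs_div] using Real.abs_sin_le_abs (x := (b - c) / 2)
  calc |Real.sin b - Real.sin c| = 2 * |Real.sin ((b - c) / 2)| * |Real.sin (a / 2)| := by
        rw [hfactor, abs_mul, abs_mul, abs_two]
    _ ≤ 2 * (|b - c| / 2) * 0.50874 := by gcongr
    _ ≤ 0.6 * |b - c| * 0.848 := by linarith [abs_nonneg (b - c)]
    _ ≤ 0.6 * |b - c| * Real.sin c := by gcongr

lemma sq_add_sq_sub_le_of_sin_mul_eq {a b c U W : ℝ} (hsum : a + b + c = π)
    (ha : |a - π / 3| ≤ π / 180) (hb : |b - π / 3| ≤ π / 180) (hc : |c - π / 3| ≤ π / 180)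
    (hU : 0 ≤ U) (hW : 0 ≤ W) (hsin : Real.sin c * W = Real.sin b * U) :
    U ^ 2 + W ^ 2 - 2 * U * W * Real.cos (a - π / 3) ≤ (0.022 * U) ^ 2 := by
  have hsin_pos : 0 < Real.sin c := by
    have := abs_le.1 hc
    exact Real.sin_pos_of_pos_of_lt_pi (by linarith [Real.pi_pos]) (by linarith [Real.pi_pos])
  have hdiff : |W - U| ≤ 0.6 * |b - c| * U := by
    refine le_of_mul_le_mul_left ?_ hsin_pos
    calc Real.sin c * |W - U| = |Real.sin c * (W - U)| := by rw [abs_mul, abs_of_pos hsin_pos]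
      _ = |(Real.sin b - Real.sin c) * U| := by congr 1; linarith
      _ = |Real.sin b - Real.sin c| * U := by rw [abs_mul, abs_of_nonneg hU]
      _ ≤ 0.6 * |b - c| * Real.sin c * U := by
          gcongr
          exact abs_sin_sub_sin_le_of_near hsum ha hc
      _ = Real.sin c * (0.6 * |b - c| * U) := by ring
  have hdiff_sq : (W - U) ^ 2 ≤ 0.36 * (b - c) ^ 2 * U ^ 2 :=
    calc (W - U) ^ 2 = |W - U| ^ 2 := (sq_abs _).symm
      _ ≤ (0.6 * |b - c| * U) ^ 2 := by gcongr
      _ = 0.36 * (b - c) ^ 2 * U ^ 2 := by rw [mul_pow, mul_pow, sq_abs]; norm_num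
  have hW_le : W ≤ 1.08 * U := by
    have hbc : |b - c| ≤ 0.1 := by
      have := abs_le.1 hb
      have := abs_le.1 hc
      exact abs_le.2 ⟨by linarith [Real.pi_lt_d4], by linarith [Real.pi_lt_d4]⟩
    nlinarith [(abs_le.1 hdiff).2]
  calc U ^ 2 + W ^ 2 - 2 * U * W * Real.cos (a - π / 3)
      ≤ U ^ 2 + W ^ 2 - 2 * U * W * (1 - (a - π / 3) ^ 2 / 2) := by
        gcongr
        exact Real.one_sub_sq_div_two_le_cos
    _ = (W - U) ^ 2 + W * U * (a - π / 3) ^ 2 := by ring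
    _ ≤ 0.36 * (b - c) ^ 2 * U ^ 2 + 1.08 * U * U * (a - π / 3) ^ 2 := by gcongr
    _ = 0.36 * ((b - π / 3 - (c - π / 3)) ^ 2 + 3 * (a - π / 3) ^ 2) * U ^ 2 := by ring
    _ ≤ 0.36 * (4 * (π / 180) ^ 2) * U ^ 2 := by
        gcongr
        exact sq_sub_add_three_mul_sq_le (by linarith) ha hb hc
    _ = (1.2 * (π / 180) * U) ^ 2 := by ring
    _ ≤ (0.022 * U) ^ 2 := by
        gcongr
        linarith [Real.pi_lt_d4]

lemma sq_norm_sub_exp_mul_I (r : ℂ) (ψ : ℝ) :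
    ‖r - Complex.exp (ψ * Complex.I)‖ ^ 2 = ‖r‖ ^ 2 + 1 - 2 * ‖r‖ * Real.cos (r.arg - ψ) := by
  rw [Complex.sq_norm, Complex.normSq_apply, Complex.sub_re, Complex.sub_im,
    Complex.exp_ofReal_mul_I_re, Complex.exp_ofReal_mul_I_im, ← Complex.norm_mul_cos_arg,
    ← Complex.norm_mul_sin_arg, Real.cos_sub]
  linear_combination ‖r‖ ^ 2 * Real.sin_sq_add_cos_sq r.arg + Real.sin_sq_add_cos_sq ψ

lemma exists_sq_norm_sub_exp_mul_eq {u v : ℂ} (hu : u ≠ 0) (hv : v ≠ 0) (φ : ℝ) :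
    ∃ ψ : ℝ, |ψ| = |φ| ∧ ‖v - Complex.exp (ψ * Complex.I) * u‖ ^ 2 =
      ‖u‖ ^ 2 + ‖v‖ ^ 2 - 2 * ‖u‖ * ‖v‖ * Real.cos (InnerProductGeometry.angle u v - φ) := by
  obtain ⟨ψ, hψ, hcos⟩ : ∃ ψ : ℝ, |ψ| = |φ| ∧
      Real.cos ((v / u).arg - ψ) = Real.cos (InnerProductGeometry.angle u v - φ) := by
    rw [InnerProductGeometry.angle_comm, Complex.angle_eq_abs_arg hv hu]
    rcases abs_cases (v / u).arg with ⟨h, -⟩ | ⟨h, -⟩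
    · exact ⟨φ, rfl, by rw [h]⟩
    · exact ⟨-φ, abs_neg φ, by rw [h, ← Real.cos_neg]; congr 1; ring⟩
  refine ⟨ψ, hψ, ?_⟩
  have hu' : ‖u‖ ≠ 0 := norm_ne_zero_iff.2 hu
  calc ‖v - Complex.exp (ψ * Complex.I) * u‖ ^ 2
      = (‖v / u - Complex.exp (ψ * Complex.I)‖ * ‖u‖) ^ 2 := by
        rw [← norm_mul, sub_mul, div_mul_cancel₀ _ hu]
    _ = (‖v / u‖ ^ 2 + 1 - 2 * ‖v / u‖ * Real.cos ((v / u).arg - ψ)) * ‖u‖ ^ 2 := by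
        rw [mul_pow, sq_norm_sub_exp_mul_I]
    _ = _ := by
        rw [hcos, norm_div]
        field_simp
        ring

lemma nearEquilateral_of_abs_angle_sub_le {x y z : ℂ} (hxy : x ≠ y)
    (hx : |∠ y x z - π / 3| ≤ π / 180) (hy : |∠ x y z - π / 3| ≤ π / 180)
    (hz : |∠ x z y - π / 3| ≤ π / 180) : NearEquilateral 0.022 x y z := by
  have hzx : z ≠ x := by
    rintro rfl
    rw [angle_self_right, abs_le] at hx
    linarith [Real.pi_pos]
  have hsum : ∠ y x z + ∠ x y z + ∠ x z y = π := by
    rw [← angle_add_angle_add_angle_eq_pi z hxy, angle_comm x y z]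
    ring
  have hsin : Real.sin (∠ x z y) * ‖z - x‖ = Real.sin (∠ x y z) * ‖y - x‖ := by
    simpa only [angle_comm y z x, dist_comm x y, dist_eq_norm] using law_sin y z x
  obtain ⟨ψ, hψ, hnorm⟩ :=
    exists_sq_norm_sub_exp_mul_eq (sub_ne_zero.2 hxy.symm) (sub_ne_zero.2 hzx) (π / 3)
  refine ⟨_, exp_sq_eq_of_abs_eq (hψ.trans (abs_of_pos (by positivity))), ?_⟩
  rw [← sq_le_sq₀ (norm_nonneg _) (by positivity), hnorm]
  exact sq_add_sq_sub_le_of_sin_mul_eq hsum hx hy hz (norm_nonneg _) (norm_nonneg _) hsin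

end Angles

section SimilarTriples

variable {ε : ℝ} {T : Fin 3 → Plane}

/-- The 3-uniform hypergraph on the plane whose edges are the triangles ε-similar to `T`. -/
def similarTriples (ε : ℝ) (T : Fin 3 → Plane) : Set (Finset Plane) :=
  {S | #S = 3 ∧ FormsSimilar ε T S}

lemma sized_similarTriples (ε : ℝ) (T : Fin 3 → Plane) : (similarTriples ε T).Sized 3 :=
  fun _ hS => hS.1

lemma simCount_eq_card_inducedEdges (ε : ℝ) (T : Fin 3 → Plane) (P : Finset Plane) :
    simCount ε T P = #(inducedEdges (similarTriples ε T) P) := by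
  rw [simCount, ← Set.ncard_coe_finset]
  congr 1
  ext S
  simp [mem_inducedEdges, similarTriples]

lemma angle_eq_triAngle (p : Fin 3 → Plane) {i j k : Fin 3} (hji : j ≠ i) (hki : k ≠ i)
    (hkj : k ≠ j) : ∠ (p j) (p i) (p k) = triAngle p i := by
  obtain ⟨rfl, rfl⟩ | ⟨rfl, rfl⟩ : j = i + 1 ∧ k = i + 2 ∨ j = i + 2 ∧ k = i + 1 := by lia
  · rfl
  · exact angle_comm _ _ _

lemma FormsSimilar.abs_angle_sub_lt {S : Finset Plane} (hS : FormsSimilar ε T S) {θ η : ℝ}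
    (hT : ∀ i, |triAngle T i - θ| ≤ η) {x y z : Plane} (hx : x ∈ S) (hy : y ∈ S) (hz : z ∈ S)
    (hyx : y ≠ x) (hzx : z ≠ x) (hzy : z ≠ y) : |∠ y x z - θ| < ε + η := by
  obtain ⟨p, hrange, -, σ, hσ⟩ := hS
  simp only [← mem_coe, hrange, Set.mem_range] at hx hy hz
  obtain ⟨⟨i, rfl⟩, ⟨j, rfl⟩, ⟨k, rfl⟩⟩ := hx, hy, hz
  rw [angle_eq_triAngle p (ne_of_apply_ne p hyx) (ne_of_apply_ne p hzx) (ne_of_apply_ne p hzy)]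
  exact (abs_sub_le _ (triAngle T (σ i)) _).trans_lt (add_lt_add_of_lt_of_le (hσ i) (hT _))

lemma FormsSimilar.nearEquilateral {S : Finset Plane} (hS : FormsSimilar ε T S)
    (hε : ε ≤ π / 360) (hT : ∀ i, |triAngle T i - π / 3| ≤ π / 360) (f : Plane →ₗᵢ[ℝ] ℂ)
    {x y z : Plane} (hx : x ∈ S) (hy : y ∈ S) (hz : z ∈ S) (hxy : x ≠ y) (hzx : z ≠ x)
    (hzy : z ≠ y) : NearEquilateral 0.022 (f x) (f y) (f z) := by
  have hangle {a b c : Plane} (ha : a ∈ S) (hb : b ∈ S) (hc : c ∈ S) (hba : b ≠ a) (hca : c ≠ a)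
      (hcb : c ≠ b) : |∠ (f b) (f a) (f c) - π / 3| ≤ π / 180 := by
    have hmap : ∠ (f b) (f a) (f c) = ∠ b a c := f.toAffineIsometry.angle_map b a c
    rw [hmap]
    linarith [hS.abs_angle_sub_lt hT ha hb hc hba hca hcb]
  exact nearEquilateral_of_abs_angle_sub_le (f.injective.ne hxy)
    (hangle hx hy hz hxy.symm hzx hzy) (hangle hy hx hz hxy hzy hzx)
    (hangle hz hx hy hzx.symm hzy.symm hxy.symm)

theorem simCount_le {h : ℕ → ℕ} (hrec : HRec h) (hε : ε ≤ π / 360)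
    (hT : ∀ i, |triAngle T i - π / 3| ≤ π / 360) (P : Finset Plane) : simCount ε T P ≤ h #P := by
  let f : Plane →ₗᵢ[ℝ] ℂ := Complex.orthonormalBasisOneI.repr.symm.toLinearIsometry
  rw [simCount_eq_card_inducedEdges]
  refine card_inducedEdges_le (ι := Fin 3) (sized_similarTriples ε T) hrec.prod_add_sum_le
    (fun V hnt hV => ?_) P
  exact hV.exists_isSplitting (sized_similarTriples ε T) f.injective
    (fun S hS x hx y hy z hz => hS.2.nearEquilateral hε hT f hx hy hz) hnt

end SimilarTriples

section Construction

open Filter Topology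

variable {ε : ℝ} {T : Fin 3 → Plane}

lemma IsTriangle.injective (hT : IsTriangle T) : T.Injective :=
  (affineIndependent_iff_not_collinear.2 hT).injective

lemma IsTriangle.continuousAt_triAngle (hT : IsTriangle T) (i : Fin 3) :
    ContinuousAt (fun p => triAngle p i) T :=
  (EuclideanGeometry.continuousAt_angle (x := (T (i + 1), T i, T (i + 2)))
    (hT.injective.ne (by lia)) (hT.injective.ne (by lia))).comp
    (f := fun p : Fin 3 → Plane => (p (i + 1), p i, p (i + 2))) (by fun_prop)

lemma IsTriangle.eventually_isTriangle_and_epsSimilar (hT : IsTriangle T) (hε : 0 < ε) :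
    ∀ᶠ p in 𝓝 T, IsTriangle p ∧ EpsSimilar ε p T := by
  have htri : ∀ᶠ p in 𝓝 T, AffineIndependent ℝ p :=
    isOpen_setOfPred_affineIndependent.mem_nhds (affineIndependent_iff_not_collinear.2 hT)
  have hangle : ∀ᶠ p in 𝓝 T, ∀ i, |triAngle p i - triAngle T i| < ε :=
    eventually_all.2 fun i => Metric.tendsto_nhds.1 (hT.continuousAt_triAngle i) ε hε
  filter_upwards [htri, hangle] with p hp hp'
  exact ⟨affineIndependent_iff_not_collinear.1 hp, Equiv.refl _, hp'⟩

lemma IsTriangle.image_mem_similarTriples {p : Fin 3 → Plane} (hp : IsTriangle p)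
    (hpT : EpsSimilar ε p T) : univ.image p ∈ similarTriples ε T :=
  ⟨by rw [card_image_of_injective _ hp.injective, card_univ, Fintype.card_fin],
    p, by simp, hp, hpT⟩

lemma injective_homothety {k V Q : Type*} [Field k] [AddCommGroup V] [Module k V]
    [AddTorsor V Q] (c : Q) {t : k} (ht : t ≠ 0) : Function.Injective (AffineMap.homothety c t) :=
  (AffineEquiv.homothetyUnitsMulHom c (Units.mk0 t ht)).injective

lemma image_homothety_mem_similarTriples (c : Plane) {t : ℝ} (ht : t ≠ 0) {S : Finset Plane}
    (hS : S ∈ similarTriples ε T) : S.image (AffineMap.homothety c t) ∈ similarTriples ε T := by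
  obtain ⟨hcard, p, hrange, htri, σ, hσ⟩ := hS
  refine ⟨by rwa [card_image_of_injective _ (injective_homothety c ht)],
    AffineMap.homothety c t ∘ p, by rw [coe_image, hrange, Set.range_comp], ?_, σ, fun i => ?_⟩
  · exact affineIndependent_iff_not_collinear.1
      ((affineIndependent_iff_not_collinear.2 htri).map' _ (injective_homothety c ht))
  · have hangle : triAngle (AffineMap.homothety c t ∘ p) i = triAngle p i :=
      EuclideanGeometry.angle_homothety _ _ _ _ ht
    rw [hangle]
    exact hσ i

lemma simCount_le_simCount_image_homothety (ε : ℝ) (T : Fin 3 → Plane) (c : Plane) {t : ℝ}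
    (ht : t ≠ 0) (P : Finset Plane) :
    simCount ε T P ≤ simCount ε T (P.image (AffineMap.homothety c t)) := by
  simp only [simCount_eq_card_inducedEdges]
  refine card_le_card_of_injOn (image (AffineMap.homothety c t)) (fun S hS => ?_)
    (image_injective (injective_homothety c ht)).injOn
  rw [mem_coe, mem_inducedEdges] at hS ⊢
  exact ⟨image_subset_image hS.1, image_homothety_mem_similarTriples c ht hS.2⟩

lemma tendsto_homothety_nhdsNE_zero {V : Type*} [NormedAddCommGroup V] [NormedSpace ℝ V]
    (c x : V) : Tendsto (fun t : ℝ => AffineMap.homothety c t x) (𝓝[≠] 0) (𝓝 c) := by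
  have hcont : Continuous fun t : ℝ => AffineMap.homothety c t x := by
    simpa only [AffineMap.homothety_eq_lineMap] using AffineMap.lineMap_continuous
  simpa using hcont.continuousWithinAt.tendsto (x := (0 : ℝ)) (s := {0}ᶜ)

variable (A : Fin 3 → Finset Plane)

lemma IsTriangle.eventually_pairwise_disjoint_image_homothety (hT : IsTriangle T) :
    ∀ᶠ t : ℝ in 𝓝[≠] 0, Pairwise fun i j =>
      Disjoint ((A i).image (AffineMap.homothety (T i) t))
        ((A j).image (AffineMap.homothety (T j) t)) := by
  simp only [Pairwise, eventually_all, disjoint_iff_ne, forall_mem_image, eventually_all_finset]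
  intro i j hij x _ y _
  have hlim := (tendsto_homothety_nhdsNE_zero (T i) x).sub (tendsto_homothety_nhdsNE_zero (T j) y)
  filter_upwards [hlim.eventually_ne (sub_ne_zero.2 (hT.injective.ne hij))] with t ht
  exact sub_ne_zero.1 ht

lemma IsTriangle.eventually_image_homothety_mem_similarTriples (hT : IsTriangle T) (hε : 0 < ε) :
    ∀ᶠ t : ℝ in 𝓝[≠] 0, ∀ p : Fin 3 → Plane,
      (∀ i, p i ∈ (A i).image (AffineMap.homothety (T i) t)) →
        univ.image p ∈ similarTriples ε T := by
  have hlift : ∀ᶠ t : ℝ in 𝓝[≠] 0, ∀ q ∈ Fintype.piFinset A,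
      univ.image (fun i => AffineMap.homothety (T i) t (q i)) ∈ similarTriples ε T := by
    refine (eventually_all_finset _).2 fun q _ => ?_
    have hlim : Tendsto (fun (t : ℝ) i => AffineMap.homothety (T i) t (q i)) (𝓝[≠] 0) (𝓝 T) :=
      tendsto_pi_nhds.2 fun i => tendsto_homothety_nhdsNE_zero (T i) (q i)
    filter_upwards [hlim.eventually (hT.eventually_isTriangle_and_epsSimilar hε)] with t ht
    exact ht.1.image_mem_similarTriples ht.2
  filter_upwards [hlift] with t ht p hp
  choose q hq hqp using fun i => mem_image.1 (hp i)
  simpa only [hqp] using ht q (Fintype.mem_piFinset.2 hq)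

lemma IsTriangle.exists_prod_add_sum_le_simCount (hT : IsTriangle T) (hε : 0 < ε) :
    ∃ P : Finset Plane, #P = ∑ i, #(A i) ∧
      ∏ i, #(A i) + ∑ i, simCount ε T (A i) ≤ simCount ε T P := by
  obtain ⟨t, hdisj, hrainbow, ht⟩ := ((hT.eventually_pairwise_disjoint_image_homothety A).and
    ((hT.eventually_image_homothety_mem_similarTriples A hε).and self_mem_nhdsWithin)).exists
  let B (i : Fin 3) : Finset Plane := (A i).image (AffineMap.homothety (T i) t)
  have hcard (i : Fin 3) : #(B i) = #(A i) := card_image_of_injective _ (injective_homothety _ ht)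
  refine ⟨univ.biUnion B, ?_, ?_⟩
  · rw [card_biUnion fun i _ j _ hij => hdisj hij]
    exact sum_congr rfl fun i _ => hcard i
  · calc ∏ i, #(A i) + ∑ i, simCount ε T (A i) ≤ ∏ i, #(B i) + ∑ i, simCount ε T (B i) := by
          simp only [hcard]
          gcongr with i
          exact simCount_le_simCount_image_homothety ε T (T i) ht (A i)
      _ ≤ simCount ε T (univ.biUnion B) := by
          simp only [simCount_eq_card_inducedEdges]
          exact prod_card_add_sum_card_inducedEdges_le (ι := Fin 3) (sized_similarTriples ε T)
            hdisj hrainbow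

theorem IsTriangle.exists_le_simCount (hT : IsTriangle T) (hε : 0 < ε) {h : ℕ → ℕ}
    (hrec : HRec h) (n : ℕ) : ∃ P : Finset Plane, #P = n ∧ h n ≤ simCount ε T P := by
  induction n using Nat.strong_induction_on with
  | _ n ih =>
  rcases lt_or_ge n 3 with hn | hn
  · obtain ⟨P, hP⟩ := Infinite.exists_subset_card_eq Plane n
    exact ⟨P, hP, by simp [hrec.eq_zero_of_lt_three hn]⟩
  · obtain ⟨a, hsum, hlt, hval⟩ := hrec.exists_eq_prod_add_sum hn
    choose A hA hcount using fun i => ih (a i) (hlt i)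
    obtain ⟨P, hP, hle⟩ := hT.exists_prod_add_sum_le_simCount A hε
    simp only [hA] at hP hle
    refine ⟨P, hP.trans hsum, hval.trans_le (le_trans ?_ hle)⟩
    gcongr with i
    exact hcount i

end Construction

/-- There is `ε₀ ≥ π/180` such that: for every triangle `T` all of whose angles differ
from `π/3` by at most `ε₀/2`, and every `0 < ε < ε₀/2`, `h(n, T, ε) = h(n)` for all `n`;
in particular `h(n, T, ε) = (n³ - n)/24` when `n` is a power of `3`. -/
theorem stmt_5 (h : ℕ → ℕ) (hrec : HRec h) :
    ∃ ε₀ : ℝ, Real.pi / 180 ≤ ε₀ ∧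
      ∀ T : Fin 3 → Plane, IsTriangle T →
        (∀ i : Fin 3, |triAngle T i - Real.pi / 3| ≤ ε₀ / 2) →
        ∀ ε : ℝ, 0 < ε → ε < ε₀ / 2 →
          (∀ n : ℕ, hGeo n T ε = h n) ∧
          (∀ n : ℕ, (∃ k : ℕ, n = 3 ^ k) → 24 * hGeo n T ε = n ^ 3 - n) := by
  refine ⟨π / 180, le_rfl, fun T hT hangle ε hε hε' => ?_⟩
  have hmax (n : ℕ) : hGeo n T ε = h n := by
    obtain ⟨P, hP, hle⟩ := hT.exists_le_simCount hε hrec n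
    have hupper {Q : Finset Plane} (hQ : #Q = n) : simCount ε T Q ≤ h n :=
      hQ ▸ simCount_le hrec (by linarith) (fun i => by linarith [hangle i]) Q
    refine IsGreatest.csSup_eq ⟨⟨P, hP, (hupper hP).antisymm hle⟩, ?_⟩
    rintro _ ⟨Q, hQ, rfl⟩
    exact hupper hQ
  refine ⟨hmax, ?_⟩
  rintro _ ⟨k, rfl⟩
  rw [hmax, ← hrec.mul_pow_three_add k, Nat.add_sub_cancel]

end
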